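/- Let (X,f) be a topological dynamical system. The following statements are equivalent: (1) p*_{X,𝒰} is of polynomial order for every open cover 𝒰 of X; (2) for every ε > 0, the function n ↦ r*(n,ε) is of polynomial order; (3) for every ε > 0, the function n ↦ s*(n,ε) is of polynomial order. -/

import Mathlib

/-!
For a fixed `n`, the three counting functions dominate one another pointwise once `ε` and the
cover `𝒰` are adjusted, so polynomial order passes between them.

* A maximal `(A,n,ε)`-separated set is spanning, so `r*(n,ε) ≤ s*(n,ε)`.
* Two points of an `(A,n,ε)`-separated set cannot be `ε/2`-shadowed by the same point, so
  `s*(n,ε) ≤ r*(n,ε/2)`.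
* If `𝒰` consists of the balls of radius `ε/2`, an element of the join contains at most one point
  of a separated set, so `r*(n,ε) ≤ s*(n,ε) ≤ p*_{X,𝒰}(n)`.
* If `δ` is a Lebesgue number of `𝒰`, each point of an `(A,n,δ)`-spanning set determines an element
  of the join containing all points it shadows, so `p*_{X,𝒰}(n) ≤ r*(n,δ)`. Here an arbitrary
  tuple of times, possibly unsorted and with repetitions, is first placed among the first `n` terms
  of an increasing sequence.

All quantities are suprema and infima in `ℕ`, which are meaningful only for bounded, resp. nonempty,
sets. Both facts follow from one uniform bound: if `𝒰` has a subcover with `k` elements, every join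
of `n` preimages of `𝒰` has a subcover with at most `k ^ n` elements.
-/

open Set Filter Topology ENNReal

noncomputable section

/-- The circle `𝕊 = ℝ / ℤ`, identified with `{z ∈ ℂ : |z| = 1}` via `x ↦ exp(2πix)`. -/
abbrev Circle1 : Type := AddCircle (1 : ℝ)

/-- The natural projection `e : ℝ → 𝕊`, `e(x) = exp(2πix)`. -/
def projS : ℝ → Circle1 := fun x => (x : Circle1)

/-- `𝒰` is an open cover of `X`. -/
def IsOpenCover {X : Type*} [TopologicalSpace X] (U : Set (Set X)) : Prop :=
  (∀ A ∈ U, IsOpen A) ∧ ⋃₀ U = univ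

/-- `N(𝒰)`: the minimal cardinality of a subcover of `𝒰`. -/
def coverN {X : Type*} (U : Set (Set X)) : ℕ :=
  sInf {n | ∃ V : Finset (Set X), ↑V ⊆ U ∧ ⋃₀ (V : Set (Set X)) = univ ∧ V.card = n}

/-- The join `⋁_{i} f^{-t i} 𝒰` of preimages of a cover along a finite sequence of times. -/
def timeJoin {X : Type*} (f : X → X) (U : Set (Set X)) {n : ℕ} (t : Fin n → ℕ) :
    Set (Set X) :=
  {A | ∃ u : Fin n → Set X, (∀ i, u i ∈ U) ∧ A = ⋂ i, f^[t i] ⁻¹' u i}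

/-- Topological entropy of `f` with respect to the cover `𝒰`:
`lim (1/n) log N(⋁_{i=1}^n f^{-i} 𝒰)`. -/
def coverEnt {X : Type*} (f : X → X) (U : Set (Set X)) : ℝ≥0∞ :=
  Filter.limsup
    (fun n : ℕ =>
      ENNReal.ofReal (Real.log (coverN (timeJoin f U (fun i : Fin n => (i : ℕ) + 1))) / n))
    Filter.atTop

/-- Topological entropy `h_top(f)`. -/
def topEnt {X : Type*} [TopologicalSpace X] (f : X → X) : ℝ≥0∞ :=
  ⨆ U ∈ {U : Set (Set X) | IsOpenCover U}, coverEnt f U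

/-- Topological sequence entropy of `f` along the sequence `a` with respect to the cover `𝒰`. -/
def seqEnt {X : Type*} (f : X → X) (a : ℕ → ℕ) (U : Set (Set X)) : ℝ≥0∞ :=
  Filter.limsup
    (fun n : ℕ =>
      ENNReal.ofReal (Real.log (coverN (timeJoin f U (fun i : Fin n => a (i : ℕ)))) / n))
    Filter.atTop

/-- `(X,f)` is topological null: the sequence entropy along every increasing sequence of
positive integers vanishes. -/
def IsNull {X : Type*} [TopologicalSpace X] (f : X → X) : Prop :=
  ∀ a : ℕ → ℕ, StrictMono a → (∀ n, 0 < a n) →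
    ∀ U : Set (Set X), IsOpenCover U → seqEnt f a U = 0

/-- The maximal pattern complexity `p*_{X,𝒰}(n)`. -/
def patternComp {X : Type*} (f : X → X) (U : Set (Set X)) (n : ℕ) : ℕ :=
  sSup {m | ∃ t : Fin n → ℕ, m = coverN (timeJoin f U t)}

/-- A function `q : ℕ → ℕ` is of polynomial order: `q(n) ≤ C n^C` for some constant `C > 0`. -/
def PolyOrder (q : ℕ → ℕ) : Prop :=
  ∃ C : ℝ, 0 < C ∧ ∀ n : ℕ, 1 ≤ n → (q n : ℝ) ≤ C * (n : ℝ) ^ C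

/-- The ω-limit set `ω(x,f) = ⋂_n closure {f^i(x) : i ≥ n}`. -/
def omegaSet {X : Type*} [TopologicalSpace X] (f : X → X) (x : X) : Set X :=
  ⋂ n : ℕ, closure {y | ∃ i, n ≤ i ∧ f^[i] x = y}

/-- `I` is an independence set for the pair of sets `{U, V}`. -/
def IsIndepSet {X : Type*} (f : X → X) (U V : Set X) (I : Set ℕ) : Prop :=
  ∀ J : Finset ℕ, ↑J ⊆ I → J.Nonempty →
    ∀ S : ℕ → Bool, (⋂ i ∈ J, f^[i] ⁻¹' (if S i then U else V)).Nonempty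

/-- `⟨x,y⟩` is an IN-pair: every pair of neighborhoods has arbitrarily large finite
independence sets. -/
def IsINPair {X : Type*} [TopologicalSpace X] (f : X → X) (x y : X) : Prop :=
  ∀ U ∈ nhds x, ∀ V ∈ nhds y, ∀ m : ℕ, ∃ J : Finset ℕ, m ≤ J.card ∧ IsIndepSet f U V ↑J

/-- `⟨x,y⟩` is an IT-pair: every pair of neighborhoods has an infinite independence set. -/
def IsITPair {X : Type*} [TopologicalSpace X] (f : X → X) (x y : X) : Prop :=
  ∀ U ∈ nhds x, ∀ V ∈ nhds y, ∃ I : Set ℕ, I.Infinite ∧ IsIndepSet f U V I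

/-- A closed nondegenerate proper subinterval (arc) of the circle. -/
def IsClosedArc (J : Set Circle1) : Prop :=
  ∃ c d : ℝ, c < d ∧ d - c < 1 ∧ J = projS '' Icc c d

/-- A closed nondegenerate subinterval of a linearly ordered space. -/
def IsClosedSubInt {X : Type*} [Preorder X] (J : Set X) : Prop :=
  ∃ c d : X, c < d ∧ J = Icc c d

/-- `J, f(J), …, f^{n-1}(J)` are pairwise disjoint and `f^n(J) = J`. -/
def IsPeriodicSet {X : Type*} (f : X → X) (J : Set X) (n : ℕ) : Prop :=
  0 < n ∧ (∀ i j, i < j → j < n → Disjoint (f^[i] '' J) (f^[j] '' J)) ∧ f^[n] '' J = J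

/-- `⟨x,y⟩` is a separable pair: `x` and `y` lie in two disjoint periodic intervals
(`isInt` is the notion of closed nondegenerate subinterval of the phase space). -/
def SeparablePair {X : Type*} (isInt : Set X → Prop) (f : X → X) (x y : X) : Prop :=
  ∃ J₁ J₂ : Set X, ∃ n₁ n₂ : ℕ,
    isInt J₁ ∧ IsPeriodicSet f J₁ n₁ ∧ isInt J₂ ∧ IsPeriodicSet f J₂ n₂ ∧
    Disjoint J₁ J₂ ∧ x ∈ J₁ ∧ y ∈ J₂

/-- `⟨x,y⟩` is a non-separable pair. -/
def NonSeparablePair {X : Type*} [TopologicalSpace X] (isInt : Set X → Prop)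
    (f : X → X) (x y : X) : Prop :=
  x ≠ y ∧ (∃ z, x ∈ omegaSet f z ∧ y ∈ omegaSet f z) ∧ ¬ SeparablePair isInt f x y

/-- `F` is a lifting of the circle map `f`. -/
def IsLift (f : Circle1 → Circle1) (F : ℝ → ℝ) : Prop :=
  Continuous F ∧ ∀ x : ℝ, projS (F x) = f (projS x)

/-- `Per(f) ≠ ∅`. -/
def HasPeriodicPt {X : Type*} (f : X → X) : Prop :=
  ∃ y, ∃ q : ℕ, 0 < q ∧ f^[q] y = y

/-- `E` is an `(A,n,ε)`-spanning set. -/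
def IsSpanningSet {X : Type*} [PseudoMetricSpace X] (f : X → X) (a : ℕ → ℕ) (n : ℕ)
    (ε : ℝ) (E : Set X) : Prop :=
  ∀ x : X, ∃ y ∈ E, ∀ i : Fin n, dist (f^[a (i : ℕ)] x) (f^[a (i : ℕ)] y) < ε

/-- `r_A(n,ε)`: minimal cardinality of an `(A,n,ε)`-spanning set. -/
def spanNum {X : Type*} [PseudoMetricSpace X] (f : X → X) (a : ℕ → ℕ) (n : ℕ) (ε : ℝ) : ℕ :=
  sInf {m | ∃ E : Finset X, IsSpanningSet f a n ε ↑E ∧ E.card = m}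

/-- `r*(n,ε) = sup_A r_A(n,ε)` over all increasing sequences `A`. -/
def rStar {X : Type*} [PseudoMetricSpace X] (f : X → X) (n : ℕ) (ε : ℝ) : ℕ :=
  sSup {m | ∃ a : ℕ → ℕ, StrictMono a ∧ m = spanNum f a n ε}

/-- `E` is an `(A,n,ε)`-separated set. -/
def IsSeparatedSet {X : Type*} [PseudoMetricSpace X] (f : X → X) (a : ℕ → ℕ) (n : ℕ)
    (ε : ℝ) (E : Set X) : Prop :=
  ∀ x ∈ E, ∀ y ∈ E, x ≠ y → ∃ i : Fin n, ε ≤ dist (f^[a (i : ℕ)] x) (f^[a (i : ℕ)] y)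

/-- `s_A(n,ε)`: maximal cardinality of an `(A,n,ε)`-separated set. -/
def sepNum {X : Type*} [PseudoMetricSpace X] (f : X → X) (a : ℕ → ℕ) (n : ℕ) (ε : ℝ) : ℕ :=
  sSup {m | ∃ E : Finset X, IsSeparatedSet f a n ε ↑E ∧ E.card = m}

/-- `s*(n,ε) = sup_A s_A(n,ε)` over all increasing sequences `A`. -/
def sStar {X : Type*} [PseudoMetricSpace X] (f : X → X) (n : ℕ) (ε : ℝ) : ℕ :=
  sSup {m | ∃ a : ℕ → ℕ, StrictMono a ∧ m = sepNum f a n ε}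

lemma PolyOrder.mono {p q : ℕ → ℕ} (hq : PolyOrder q) (h : ∀ n, p n ≤ q n) : PolyOrder p := by
  obtain ⟨C, hC, hb⟩ := hq
  exact ⟨C, hC, fun n hn => (Nat.cast_le.mpr (h n)).trans (hb n hn)⟩

/-- The uniform bound `k ^ n` on subcovers of joins, independent of the times: `k` is the size
of a finite subcover of `U`, and the join of its preimages is indexed by `Fin n`-tuples. -/
lemma exists_timeJoin_subcover {X : Type*} [TopologicalSpace X] [CompactSpace X] (f : X → X)
    {U : Set (Set X)} (hU : IsOpenCover U) :
    ∃ k : ℕ, ∀ (n : ℕ) (t : Fin n → ℕ), ∃ V : Finset (Set X), ↑V ⊆ timeJoin f U t ∧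
      ⋃₀ (V : Set (Set X)) = univ ∧ V.card ≤ k ^ n := by
  classical
  obtain ⟨W, hWU, hWf, hW⟩ := isCompact_univ.elim_finite_subcover_image (c := id) hU.1
    (by simpa [sUnion_eq_biUnion] using hU.2.ge)
  lift W to Finset (Set X) using hWf
  refine ⟨W.card, fun n t => ⟨(Fintype.piFinset fun _ : Fin n => W).image
    fun u => ⋂ i, f^[t i] ⁻¹' u i, ?_, ?_, ?_⟩⟩
  · intro A hA
    obtain ⟨u, hu, rfl⟩ := Finset.mem_image.mp hA
    exact ⟨u, fun i => hWU (Fintype.mem_piFinset.mp hu i), rfl⟩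
  · refine eq_univ_of_forall fun x => ?_
    have hex : ∀ i, ∃ A ∈ W, f^[t i] x ∈ A := fun i => by
      simpa using hW (mem_univ (f^[t i] x))
    choose u hu hxu using hex
    exact ⟨_, Finset.mem_coe.mpr (Finset.mem_image_of_mem _ (Fintype.mem_piFinset.mpr hu)),
      mem_iInter.mpr hxu⟩
  · exact Finset.card_image_le.trans (by simp)

/-- The infimum defining `coverN` is attained on a join of preimages of an open cover. -/
lemma exists_card_eq_coverN {X : Type*} [TopologicalSpace X] [CompactSpace X] (f : X → X)
    {U : Set (Set X)} (hU : IsOpenCover U) {n : ℕ} (t : Fin n → ℕ) :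
    ∃ V : Finset (Set X), ↑V ⊆ timeJoin f U t ∧ ⋃₀ (V : Set (Set X)) = univ ∧
      V.card = coverN (timeJoin f U t) := by
  obtain ⟨k, hk⟩ := exists_timeJoin_subcover f hU
  obtain ⟨V, h1, h2, -⟩ := hk n t
  exact Nat.sInf_mem (s := {n | ∃ V : Finset (Set X), ↑V ⊆ timeJoin f U t ∧
    ⋃₀ (V : Set (Set X)) = univ ∧ V.card = n}) ⟨_, V, h1, h2, rfl⟩

lemma coverN_le_patternComp {X : Type*} [TopologicalSpace X] [CompactSpace X] (f : X → X)
    {U : Set (Set X)} (hU : IsOpenCover U) {n : ℕ} (t : Fin n → ℕ) :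
    coverN (timeJoin f U t) ≤ patternComp f U n := by
  obtain ⟨k, hk⟩ := exists_timeJoin_subcover f hU
  refine le_csSup ⟨k ^ n, ?_⟩ ⟨t, rfl⟩
  rintro _ ⟨s, rfl⟩
  obtain ⟨V, h1, h2, h3⟩ := hk n s
  exact le_trans (Nat.sInf_le ⟨V, h1, h2, rfl⟩) h3

/-- Any `n` times, in any order and possibly repeated, occur among the first `n` terms of an
increasing sequence. -/
lemma exists_strictMono_extending {n : ℕ} (t : Fin n → ℕ) :
    ∃ a : ℕ → ℕ, StrictMono a ∧ ∀ i, ∃ j : Fin n, a j = t i := by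
  classical
  have hcard : (Finset.univ.image t).card ≤ n := Finset.card_image_le.trans (by simp)
  obtain ⟨S, hS, hSn⟩ := Infinite.exists_superset_card_eq _ n hcard
  refine ⟨fun i => if h : i < n then S.orderEmbOfFin hSn ⟨i, h⟩ else S.sup id + i + 1, ?_, ?_⟩
  · intro i j hij
    by_cases hj : j < n
    · simp only [hij.trans hj, hj, dif_pos]
      exact (S.orderEmbOfFin hSn).strictMono hij
    · by_cases hi : i < n
      · simp only [hi, hj, dif_pos, dif_neg, not_false_eq_true]
        have : S.orderEmbOfFin hSn ⟨i, hi⟩ ≤ S.sup id :=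
          Finset.le_sup (f := id) (S.orderEmbOfFin_mem hSn ⟨i, hi⟩)
        omega
      · simp only [hi, hj, dif_neg, not_false_eq_true]
        omega
  · intro i
    have hi : t i ∈ range (S.orderEmbOfFin hSn) := by
      rw [Finset.range_orderEmbOfFin]
      exact hS (Finset.mem_image_of_mem t (Finset.mem_univ i))
    obtain ⟨j, hj⟩ := hi
    exact ⟨j, by simpa using hj⟩

lemma isOpenCover_balls {X : Type*} [MetricSpace X] {r : ℝ} (hr : 0 < r) :
    IsOpenCover (range fun x : X => Metric.ball x r) := by
  refine ⟨?_, eq_univ_of_forall fun x =>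
    mem_sUnion_of_mem (Metric.mem_ball_self hr) (mem_range_self x)⟩
  rintro _ ⟨x, rfl⟩
  exact Metric.isOpen_ball

section Metric

variable {X : Type*} [MetricSpace X] [CompactSpace X]

/-- Elements of the join of the cover by `ε/2`-balls contain at most one point of an
`ε`-separated set. -/
lemma card_le_patternComp (f : X → X) {ε : ℝ} (hε : 0 < ε) (a : ℕ → ℕ) (n : ℕ)
    (E : Finset X) (hE : IsSeparatedSet f a n ε ↑E) :
    E.card ≤ patternComp f (range fun x : X => Metric.ball x (ε / 2)) n := by
  obtain ⟨V, hVU, hV, hc⟩ := exists_card_eq_coverN f (isOpenCover_balls (X := X) (half_pos hε))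
    (fun i : Fin n => a i)
  refine le_trans ?_ (hc.le.trans (coverN_le_patternComp f (isOpenCover_balls (half_pos hε)) _))
  have hex : ∀ x : X, ∃ A ∈ V, x ∈ A := fun x => by
    have hx : x ∈ ⋃₀ (V : Set (Set X)) := hV ▸ mem_univ x
    simpa using hx
  choose g hgV hg using hex
  refine Finset.card_le_card_of_injOn g (fun x _ => hgV x) fun x hx y hy hxy => ?_
  by_contra hne
  obtain ⟨i, hi⟩ := hE x hx y hy hne
  obtain ⟨u, hu, hgu⟩ := hVU (hgV x)
  obtain ⟨z, hz⟩ := hu i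
  have h1 := hg x
  have h2 := hg y
  rw [← hxy] at h2
  rw [hgu, mem_iInter] at h1 h2
  have h1 := h1 i
  have h2 := h2 i
  rw [mem_preimage, ← hz, Metric.mem_ball] at h1 h2
  have := dist_triangle_right (f^[a i] x) (f^[a i] y) z
  linarith

lemma bddAbove_sep (f : X → X) {ε : ℝ} (hε : 0 < ε) (a : ℕ → ℕ) (n : ℕ) :
    BddAbove {m | ∃ E : Finset X, IsSeparatedSet f a n ε ↑E ∧ E.card = m} := by
  refine ⟨patternComp f (range fun x : X => Metric.ball x (ε / 2)) n, ?_⟩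
  rintro _ ⟨E, hE, rfl⟩
  exact card_le_patternComp f hε a n E hE

/-- The supremum defining `sepNum` is attained. -/
lemma exists_card_eq_sepNum (f : X → X) {ε : ℝ} (hε : 0 < ε) (a : ℕ → ℕ) (n : ℕ) :
    ∃ E : Finset X, IsSeparatedSet f a n ε ↑E ∧ E.card = sepNum f a n ε :=
  Nat.sSup_mem (s := {m | ∃ E : Finset X, IsSeparatedSet f a n ε ↑E ∧ E.card = m})
    ⟨0, ∅, by simp [IsSeparatedSet], rfl⟩ (bddAbove_sep f hε a n)

lemma sepNum_le_patternComp (f : X → X) {ε : ℝ} (hε : 0 < ε) (a : ℕ → ℕ) (n : ℕ) :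
    sepNum f a n ε ≤ patternComp f (range fun x : X => Metric.ball x (ε / 2)) n := by
  obtain ⟨E, hE, hc⟩ := exists_card_eq_sepNum f hε a n
  exact hc ▸ card_le_patternComp f hε a n E hE

/-- A separated set of maximal cardinality is spanning. -/
lemma exists_spanning_card_eq_sepNum (f : X → X) {ε : ℝ} (hε : 0 < ε) (a : ℕ → ℕ) (n : ℕ) :
    ∃ E : Finset X, IsSpanningSet f a n ε ↑E ∧ E.card = sepNum f a n ε := by
  classical
  obtain ⟨E, hE, hc⟩ := exists_card_eq_sepNum f hε a n
  refine ⟨E, fun x => ?_, hc⟩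
  by_contra! hx
  have hxE : x ∉ E := fun h => by
    obtain ⟨i, hi⟩ := hx x h
    rw [dist_self] at hi
    linarith
  have hins : IsSeparatedSet f a n ε ↑(insert x E) := by
    intro y hy z hz hyz
    rw [Finset.coe_insert, mem_insert_iff] at hy hz
    rcases hy with rfl | hy <;> rcases hz with rfl | hz
    · exact absurd rfl hyz
    · exact hx z hz
    · obtain ⟨i, hi⟩ := hx y hy
      exact ⟨i, by rwa [dist_comm]⟩
    · exact hE y hy z hz hyz
  have hle : (insert x E).card ≤ sepNum f a n ε :=
    le_csSup (bddAbove_sep f hε a n) ⟨_, hins, rfl⟩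
  rw [Finset.card_insert_of_notMem hxE] at hle
  omega

lemma spanNum_le_sepNum (f : X → X) {ε : ℝ} (hε : 0 < ε) (a : ℕ → ℕ) (n : ℕ) :
    spanNum f a n ε ≤ sepNum f a n ε :=
  Nat.sInf_le (exists_spanning_card_eq_sepNum f hε a n)

/-- The infimum defining `spanNum` is attained. -/
lemma exists_card_eq_spanNum (f : X → X) {ε : ℝ} (hε : 0 < ε) (a : ℕ → ℕ) (n : ℕ) :
    ∃ E : Finset X, IsSpanningSet f a n ε ↑E ∧ E.card = spanNum f a n ε :=
  Nat.sInf_mem (s := {m | ∃ E : Finset X, IsSpanningSet f a n ε ↑E ∧ E.card = m})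
    ⟨_, exists_spanning_card_eq_sepNum f hε a n⟩

/-- Two `ε`-separated points cannot both be `ε/2`-shadowed by one point. -/
lemma sepNum_le_spanNum_half (f : X → X) {ε : ℝ} (hε : 0 < ε) (a : ℕ → ℕ) (n : ℕ) :
    sepNum f a n ε ≤ spanNum f a n (ε / 2) := by
  obtain ⟨E, hE, hEc⟩ := exists_card_eq_sepNum f hε a n
  obtain ⟨F, hF, hFc⟩ := exists_card_eq_spanNum f (half_pos hε) a n
  rw [← hEc, ← hFc]
  choose g hgF hg using hF
  refine Finset.card_le_card_of_injOn g (fun x _ => hgF x) fun x hx y hy hxy => ?_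
  by_contra hne
  obtain ⟨i, hi⟩ := hE x hx y hy hne
  have h1 := hg x i
  have h2 := hg y i
  rw [← hxy] at h2
  have := dist_triangle_right (f^[a i] x) (f^[a i] y) (f^[a i] (g x))
  linarith

lemma sepNum_le_sStar (f : X → X) {ε : ℝ} (hε : 0 < ε) {a : ℕ → ℕ} (ha : StrictMono a) (n : ℕ) :
    sepNum f a n ε ≤ sStar f n ε := by
  refine le_csSup ⟨patternComp f (range fun x : X => Metric.ball x (ε / 2)) n, ?_⟩ ⟨a, ha, rfl⟩
  rintro _ ⟨b, -, rfl⟩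
  exact sepNum_le_patternComp f hε b n

lemma spanNum_le_rStar (f : X → X) {ε : ℝ} (hε : 0 < ε) {a : ℕ → ℕ} (ha : StrictMono a) (n : ℕ) :
    spanNum f a n ε ≤ rStar f n ε := by
  refine le_csSup ⟨sStar f n ε, ?_⟩ ⟨a, ha, rfl⟩
  rintro _ ⟨b, hb, rfl⟩
  exact (spanNum_le_sepNum f hε b n).trans (sepNum_le_sStar f hε hb n)

lemma rStar_le_sStar (f : X → X) {ε : ℝ} (hε : 0 < ε) (n : ℕ) : rStar f n ε ≤ sStar f n ε := by
  refine csSup_le ⟨_, id, strictMono_id, rfl⟩ ?_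
  rintro _ ⟨a, ha, rfl⟩
  exact (spanNum_le_sepNum f hε a n).trans (sepNum_le_sStar f hε ha n)

lemma sStar_le_rStar_half (f : X → X) {ε : ℝ} (hε : 0 < ε) (n : ℕ) :
    sStar f n ε ≤ rStar f n (ε / 2) := by
  refine csSup_le ⟨_, id, strictMono_id, rfl⟩ ?_
  rintro _ ⟨a, ha, rfl⟩
  exact (sepNum_le_spanNum_half f hε a n).trans (spanNum_le_rStar f (half_pos hε) ha n)

lemma rStar_le_patternComp (f : X → X) {ε : ℝ} (hε : 0 < ε) (n : ℕ) :
    rStar f n ε ≤ patternComp f (range fun x : X => Metric.ball x (ε / 2)) n := by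
  refine csSup_le ⟨_, id, strictMono_id, rfl⟩ ?_
  rintro _ ⟨a, -, rfl⟩
  exact (spanNum_le_sepNum f hε a n).trans (sepNum_le_patternComp f hε a n)

/-- When `δ` is a Lebesgue number of the cover `U`, the join along `t` has a subcover indexed by a
spanning set for an increasing sequence whose first `n` terms include all the `t i`. -/
lemma patternComp_le_rStar (f : X → X) {U : Set (Set X)} {δ : ℝ} (hδ : 0 < δ)
    (hL : ∀ x : X, ∃ A ∈ U, Metric.ball x δ ⊆ A) (n : ℕ) : patternComp f U n ≤ rStar f n δ := by
  classical
  refine csSup_le ⟨_, fun _ => 0, rfl⟩ ?_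
  rintro _ ⟨t, rfl⟩
  obtain ⟨a, ha, hat⟩ := exists_strictMono_extending t
  obtain ⟨E, hE, hEc⟩ := exists_card_eq_spanNum f hδ a n
  refine le_trans ?_ (hEc.le.trans (spanNum_le_rStar f hδ ha n))
  choose A hAU hA using hL
  let B : X → Set X := fun y => ⋂ i, f^[t i] ⁻¹' A (f^[t i] y)
  suffices h : ↑(E.image B) ⊆ timeJoin f U t ∧ ⋃₀ (↑(E.image B) : Set (Set X)) = univ from
    le_trans (Nat.sInf_le ⟨E.image B, h.1, h.2, rfl⟩) Finset.card_image_le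
  refine ⟨?_, ?_⟩
  · intro S hS
    obtain ⟨y, -, rfl⟩ := Finset.mem_image.mp hS
    exact ⟨fun i => A (f^[t i] y), fun i => hAU _, rfl⟩
  · refine eq_univ_of_forall fun x => ?_
    obtain ⟨y, hy, hxy⟩ := hE x
    refine ⟨B y, Finset.mem_coe.mpr (Finset.mem_image_of_mem B hy), mem_iInter.mpr fun i => ?_⟩
    obtain ⟨j, hj⟩ := hat i
    exact hA _ (Metric.mem_ball.mpr (hj ▸ hxy j))

end Metric

/-- Equivalence of polynomial order of `p*`, of `r*`, and of `s*`. -/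
theorem polyOrder_patternComp_iff_spanning_iff_separated {X : Type*}
    [MetricSpace X] [CompactSpace X] (f : X → X) (hf : Continuous f) :
    ((∀ U : Set (Set X), IsOpenCover U → PolyOrder (patternComp f U)) ↔
      (∀ ε : ℝ, 0 < ε → PolyOrder fun n => rStar f n ε)) ∧
    ((∀ ε : ℝ, 0 < ε → PolyOrder fun n => rStar f n ε) ↔
      (∀ ε : ℝ, 0 < ε → PolyOrder fun n => sStar f n ε)) := by
  refine ⟨⟨fun h ε hε => ?_, fun h U hU => ?_⟩, fun h ε hε => ?_, fun h ε hε => ?_⟩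
  · exact (h _ (isOpenCover_balls (half_pos hε))).mono fun n => rStar_le_patternComp f hε n
  · obtain ⟨δ, hδ, hL⟩ := lebesgue_number_lemma_of_metric_sUnion isCompact_univ hU.1 hU.2.ge
    exact (h δ hδ).mono fun n => patternComp_le_rStar f hδ (fun x => hL x (mem_univ x)) n
  · exact (h _ (half_pos hε)).mono fun n => sStar_le_rStar_half f hε n
  · exact (h ε hε).mono fun n => rStar_le_sStar f hε n

end
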